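/- There exists a constant C > 0 and, for every r ≥ 1 and every ball B_r ⊂ ℝ³ of radius r, a measurable weight W_{B_r} : ℝ³ → (0,∞) with W_{B_r} ≥ 1 on B_r and W_{B_r}(x) ≤ C (1 + dist(x, B_r)/r)^{−100} for all x, such that the following trilinear restriction estimate holds. Let s > 0 with r ≥ 10 s ≥ 10, let I₁, I₂, I₃ ⊂ [0,1] be intervals that are pairwise separated by at least s^{−1}, and for i = 1,2,3 let f_i : ℝ³ → ℂ be a Schwartz function whose Fourier transform is supported in {(t, t² + ω₂, t³ + ω₃) : t ∈ I_i, |(ω₂,ω₃)| ≤ r^{−1}}. Then ∫_{B_r} |f₁ f₂ f₃|² ≤ C s³ |B_r|^{−2} ∏_{i=1}^3 ∫_{ℝ³} |f_i|² W_{B_r}. -/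

import Mathlib

open MeasureTheory Real Complex Set Finset
open scoped FourierTransform

noncomputable section

abbrev R3 : Type := EuclideanSpace ℝ (Fin 3)

/-- The vertical `r⁻¹`-neighborhood of the arc of the moment curve over the interval `I`:
`{γ(t) + (0,ω₂,ω₃) : t ∈ I, |(ω₂,ω₃)| ≤ r⁻¹}` where `γ(t) = (t,t²,t³)`. -/
def momNbhd (I : Set ℝ) (r : ℝ) : Set R3 :=
  {ξ | ξ 0 ∈ I ∧ (ξ 1 - (ξ 0)^2)^2 + (ξ 2 - (ξ 0)^3)^2 ≤ (r⁻¹)^2}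

def areaMap (x : ℝ) (p : ℝ × ℝ) : ℝ × ℝ :=
  (p.1^2 + p.2^2 + (x - p.1 - p.2)^2, p.1^3 + p.2^3 + (x - p.1 - p.2)^3)

def areaDeriv (x : ℝ) (p : ℝ × ℝ) : ℝ × ℝ →L[ℝ] ℝ × ℝ :=
  (Matrix.toLin (.finTwoProd ℝ) (.finTwoProd ℝ)
    !![2 * p.1 - 2 * (x - p.1 - p.2), 2 * p.2 - 2 * (x - p.1 - p.2);
      3 * p.1^2 - 3 * (x - p.1 - p.2)^2, 3 * p.2^2 - 3 * (x - p.1 - p.2)^2]).toContinuousLinearMap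

lemma areaDeriv_det (x : ℝ) (p : ℝ × ℝ) :
    (areaDeriv x p).det =
      6 * (p.1 - p.2) * (p.1 - (x - p.1 - p.2)) * ((x - p.1 - p.2) - p.2) * (-1) * (-1) := by
  unfold areaDeriv
  simp only [LinearMap.det_toContinuousLinearMap, LinearMap.det_toLin,
    Matrix.det_fin_two_of]
  ring

lemma areaMap_hasFDerivAt (x : ℝ) (p : ℝ × ℝ) :
    HasFDerivAt (areaMap x) (areaDeriv x p) p := by
  unfold areaDeriv
  rw [Matrix.toLin_finTwoProd_toContinuousLinearMap]
  have h1 : HasFDerivAt (fun p : ℝ × ℝ => p.1) (ContinuousLinearMap.fst ℝ ℝ ℝ) p := hasFDerivAt_fst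
  have h2 : HasFDerivAt (fun p : ℝ × ℝ => p.2) (ContinuousLinearMap.snd ℝ ℝ ℝ) p := hasFDerivAt_snd
  have h3 := (h1.const_sub x).sub h2
  refine (HasFDerivAt.prodMk (((h1.pow 2).add (h2.pow 2)).add (h3.pow 2))
    (((h1.pow 3).add (h2.pow 3)).add (h3.pow 3))).congr_fderiv ?_
  ext <;> simp <;> ring

lemma area_bound (J : Fin 3 → Set ℝ) (hJ : ∀ i, MeasurableSet (J i)) (d : ℝ) (hd : 0 < d)
    (hsep : ∀ i j, i ≠ j → ∀ t ∈ J i, ∀ t' ∈ J j, d ≤ |t - t'|) (x y w δ : ℝ) :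
    volume {p : ℝ × ℝ | p.1 ∈ J 0 ∧ p.2 ∈ J 1 ∧ x - p.1 - p.2 ∈ J 2 ∧
      areaMap x p ∈ Set.Icc (y - δ) (y + δ) ×ˢ Set.Icc (w - δ) (w + δ)} * ENNReal.ofReal (6 * d^3)
      ≤ ENNReal.ofReal (2 * δ) * ENNReal.ofReal (2 * δ) := by
  set S := {p : ℝ × ℝ | p.1 ∈ J 0 ∧ p.2 ∈ J 1 ∧ x - p.1 - p.2 ∈ J 2 ∧
      areaMap x p ∈ Set.Icc (y - δ) (y + δ) ×ˢ Set.Icc (w - δ) (w + δ)} with hS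
  have hSm : MeasurableSet S := by
    have hm : Measurable (areaMap x) := by unfold areaMap; fun_prop
    refine MeasurableSet.inter (measurable_fst (hJ 0)) (MeasurableSet.inter (measurable_snd (hJ 1))
      (MeasurableSet.inter ?_ (hm (measurableSet_Icc.prod measurableSet_Icc))))
    exact (show Measurable fun p : ℝ × ℝ => x - p.1 - p.2 by fun_prop) (hJ 2)
  have hne : ∀ i j, i ≠ j → ∀ t ∈ J i, ∀ t' ∈ J j, t - t' ≠ 0 := by
    intro i j hij t ht t' ht' h
    have := hsep i j hij t ht t' ht'
    rw [h, abs_zero] at this; linarith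
  have hinj : InjOn (areaMap x) S := by
    rintro ⟨a, b⟩ ⟨ha, hb, hc, -⟩ ⟨a', b'⟩ ⟨ha', hb', hc', -⟩ h
    simp only [areaMap, Prod.mk.injEq] at h
    simp only at ha hb hc ha' hb' hc'
    obtain ⟨h2, h3⟩ := h
    set c := x - a - b with hcd
    set c' := x - a' - b' with hcd'
    have h1 : a + b + c = a' + b' + c' := by rw [hcd, hcd']; ring
    have e2 : a*b+a*c+b*c = a'*b'+a'*c'+b'*c' := by
      linear_combination (1/2) * (a+b+c + (a'+b'+c')) * h1 - (1/2) * h2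
    have e3 : a*b*c = a'*b'*c' := by
      have : a' = a + b + c - b' - c' := by linarith
      linear_combination (1/3) * h3 - (1/3) * ((a^2+b^2+c^2)*h1 + (a'+b'+c')*h2) + (1/3) * (h1 * (a*b+a*c+b*c) + (a'+b'+c') * e2)
    have ka : (a' - a) * (a' - b) * (a' - c) = 0 := by
      linear_combination (-a'^2) * h1 + a' * e2 - e3
    have kb : (b' - a) * (b' - b) * (b' - c) = 0 := by
      linear_combination (-b'^2) * h1 + b' * e2 - e3
    have n1 := hne 0 1 (by decide) a' ha' b hb
    have n2 := hne 0 2 (by decide) a' ha' c hc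
    have n3 := hne 1 0 (by decide) b' hb' a ha
    have n4 := hne 1 2 (by decide) b' hb' c hc
    have ra : a' - a = 0 := by simpa [n1, n2] using ka
    have rb : b' - b = 0 := by simpa [n3, n4] using kb
    ext <;> simp <;> linarith
  have key := lintegral_abs_det_fderiv_eq_addHaar_image volume hSm
    (fun p _ => (areaMap_hasFDerivAt x p).hasFDerivWithinAt) hinj
  calc volume S * ENNReal.ofReal (6 * d^3) = ∫⁻ p in S, ENNReal.ofReal (6 * d^3) := by
        rw [setLIntegral_const, mul_comm]
    _ ≤ ∫⁻ p in S, ENNReal.ofReal |(areaDeriv x p).det| := by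
        refine setLIntegral_mono' hSm ?_
        rintro ⟨a, b⟩ ⟨ha, hb, hc, -⟩
        apply ENNReal.ofReal_le_ofReal
        rw [areaDeriv_det]
        simp only [abs_mul] at *
        have n1 := hsep 0 1 (by decide) a ha b hb
        have n2 := hsep 0 2 (by decide) a ha _ hc
        have n3 := hsep 2 1 (by decide) _ hc b hb
        simp only [abs_neg, abs_one, mul_one]
        rw [abs_of_pos (by norm_num : (0:ℝ) < 6)]
        calc 6 * d^3 = 6 * d * d * d := by ring
          _ ≤ _ := by gcongr
    _ = volume (areaMap x '' S) := key
    _ ≤ volume (Set.Icc (y - δ) (y + δ) ×ˢ Set.Icc (w - δ) (w + δ)) := by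
        apply measure_mono
        rintro _ ⟨p, hp, rfl⟩
        exact hp.2.2.2
    _ = _ := by
        rw [Measure.volume_eq_prod, Measure.prod_prod, Real.volume_Icc, Real.volume_Icc]
        congr 2 <;> ring

lemma lintegral_R3 (g : ℝ → ℝ → ℝ → ENNReal) (hg : Measurable fun q : ℝ × ℝ × ℝ => g q.1 q.2.1 q.2.2) :
    ∫⁻ x : R3, g (x 0) (x 1) (x 2) = ∫⁻ t, ∫⁻ u, ∫⁻ v, g t u v := by
  have e1 := EuclideanSpace.volume_preserving_symm_measurableEquiv_toLp (Fin 3)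
  have e2 := volume_preserving_piFinSuccAbove (fun _ : Fin 3 => ℝ) 0
  have e3 := volume_preserving_finTwoArrow ℝ
  have e23 := (MeasurePreserving.prod (MeasurePreserving.id (volume : Measure ℝ)) e3)
  have e := e23.comp (e2.comp e1)
  have := e.lintegral_comp hg
  rw [lintegral_prod _ hg.aemeasurable] at this
  rw [← show _ = ∫⁻ t, ∫⁻ u, ∫⁻ v, g t u v from lintegral_congr fun t => lintegral_prod (fun q : ℝ × ℝ => g t q.1 q.2) (by fun_prop)]
  rw [← Measure.volume_eq_prod, ← this]
  rfl

lemma lemK (h : ℝ → ENNReal) (hh : Measurable h) (δ : ℝ) :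
    ∫⁻ x : R3, h (x 0) * (Set.Icc (-δ) δ).indicator 1 (x 1 - (x 0)^2) *
      (Set.Icc (-δ) δ).indicator 1 (x 2 - (x 0)^3) = ENNReal.ofReal (2*δ)^2 * ∫⁻ t, h t := by
  have hi : Measurable ((Set.Icc (-δ) δ).indicator (1 : ℝ → ENNReal)) :=
    measurable_one.indicator measurableSet_Icc
  have h1 : ∀ c : ℝ, ∫⁻ v, (Set.Icc (-δ) δ).indicator (1 : ℝ → ENNReal) (v - c) = ENNReal.ofReal (2*δ) := by
    intro c
    rw [lintegral_sub_right_eq_self (fun v => (Set.Icc (-δ) δ).indicator (1 : ℝ → ENNReal) v) c,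
      lintegral_indicator_one measurableSet_Icc, Real.volume_Icc]
    congr 1; ring
  rw [lintegral_R3 (fun t u v => h t * (Set.Icc (-δ) δ).indicator 1 (u - t^2) *
      (Set.Icc (-δ) δ).indicator 1 (v - t^3)) (by fun_prop)]
  rw [← lintegral_const_mul _ hh]
  refine lintegral_congr fun t => ?_
  have : ∀ u : ℝ, ∫⁻ v, h t * (Set.Icc (-δ) δ).indicator 1 (u - t^2) *
      (Set.Icc (-δ) δ).indicator 1 (v - t^3) = h t * (Set.Icc (-δ) δ).indicator 1 (u - t^2) * ENNReal.ofReal (2*δ) := by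
    intro u
    rw [lintegral_const_mul _ (by fun_prop), h1]
  simp_rw [this]
  rw [lintegral_mul_const _ (by fun_prop), lintegral_const_mul _ (by fun_prop), h1]
  ring

lemma fourier_mul_int (G h : R3 → ℂ) (hG : Integrable G) (hh : Integrable h) (ρ : ℝ) (ξ : R3) :
    𝓕 (fun x => (∫ η, (𝐞 (ρ * inner ℝ η x) : ℂ) * G η) * h x) ξ = ∫ η, G η * 𝓕 h (ξ - ρ • η) := by
  have e1 : 𝓕 (fun x => (∫ η, (𝐞 (ρ * inner ℝ η x) : ℂ) * G η) * h x) ξ =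
      ∫ x, ∫ η, (𝐞 (-inner ℝ x ξ) : ℂ) * ((𝐞 (ρ * inner ℝ η x) : ℂ) * G η * h x) := by
    rw [Real.fourier_eq]
    refine integral_congr_ae (Filter.Eventually.of_forall fun x => ?_)
    simp only [Circle.smul_def, smul_eq_mul]
    rw [integral_const_mul, integral_mul_const]
  rw [e1, integral_integral_swap]
  · refine integral_congr_ae (Filter.Eventually.of_forall fun η => ?_)
    simp only
    rw [Real.fourier_eq, ← integral_const_mul]
    refine integral_congr_ae (Filter.Eventually.of_forall fun x => ?_)
    simp only [Circle.smul_def, smul_eq_mul]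
    have : (𝐞 (-inner ℝ x (ξ - ρ • η)) : ℂ) = (𝐞 (-inner ℝ x ξ) : ℂ) * (𝐞 (ρ * inner ℝ η x) : ℂ) := by
      rw [← Circle.coe_mul, ← AddChar.map_add_eq_mul, inner_sub_right, inner_smul_right,
        real_inner_comm η x]
      congr 2; ring
    rw [this]; ring
  · have hb : Integrable (fun p : R3 × R3 => h p.1 * G p.2) (volume.prod volume) := hh.mul_prod hG
    refine hb.mono ?_ ?_
    · have c1 : Continuous (fun p : R3 × R3 => (𝐞 (-inner ℝ p.1 ξ) : ℂ)) :=
        continuous_subtype_val.comp (continuous_fourierChar.comp (by fun_prop))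
      have c2 : Continuous (fun p : R3 × R3 => (𝐞 (ρ * inner ℝ p.2 p.1) : ℂ)) :=
        continuous_subtype_val.comp (continuous_fourierChar.comp (by fun_prop))
      refine ((c1.mul c2).aestronglyMeasurable.mul hb.aestronglyMeasurable).congr ?_
      refine Filter.Eventually.of_forall fun p => ?_
      simp [Function.uncurry]; ring
    · refine Filter.Eventually.of_forall fun p => ?_
      simp only [Function.uncurry, norm_mul, Circle.norm_coe, one_mul]
      rw [mul_comm]

lemma fourier_mul_schwartz (g h : SchwartzMap R3 ℂ) (ξ : R3) :
    𝓕 (fun x => g x * h x) ξ = ∫ η, 𝓕 (g : R3 → ℂ) η * 𝓕 (h : R3 → ℂ) (ξ - η) := by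
  have := fourier_mul_int (𝓕 g : SchwartzMap R3 ℂ) h (𝓕 g : SchwartzMap R3 ℂ).integrable h.integrable 1 ξ
  simp only [one_smul, SchwartzMap.fourier_coe] at this
  rw [← this]
  refine congrFun (congrArg _ (funext fun x => ?_)) ξ
  congr 1
  have : (𝓕⁻ (𝓕 g) : SchwartzMap R3 ℂ) x = g x := by simp
  rw [← this, SchwartzMap.fourierInv_coe, Real.fourierInv_eq, SchwartzMap.fourier_coe]
  simp [Circle.smul_def]

def fatN (J : Set ℝ) (δ : ℝ) : Set R3 :=
  {ξ | ξ 0 ∈ J ∧ ξ 1 - (ξ 0)^2 ∈ Set.Icc (-δ) δ ∧ ξ 2 - (ξ 0)^3 ∈ Set.Icc (-δ) δ}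

lemma fatN_meas (J : Set ℝ) (hJ : MeasurableSet J) (δ : ℝ) : MeasurableSet (fatN J δ) := by
  refine MeasurableSet.inter ((show Measurable fun ξ : R3 => ξ 0 by fun_prop) hJ)
    (MeasurableSet.inter ?_ ?_)
  · exact (show Measurable fun ξ : R3 => ξ 1 - (ξ 0)^2 by fun_prop) measurableSet_Icc
  · exact (show Measurable fun ξ : R3 => ξ 2 - (ξ 0)^3 by fun_prop) measurableSet_Icc

lemma overlap (J : Fin 3 → Set ℝ) (hJ : ∀ i, MeasurableSet (J i)) (d : ℝ) (hd : 0 < d)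
    (hsep : ∀ i j, i ≠ j → ∀ t ∈ J i, ∀ t' ∈ J j, d ≤ |t - t'|) (δ : ℝ) (hδ : 0 ≤ δ) (ξ : R3) :
    ∫⁻ η : R3, ∫⁻ ζ : R3, (fatN (J 0) δ).indicator (1 : R3 → ENNReal) η *
      (fatN (J 1) δ).indicator (1 : R3 → ENNReal) ζ *
      (fatN (J 2) δ).indicator (1 : R3 → ENNReal) (ξ - η - ζ) ≤
      ENNReal.ofReal (96 * δ^6 / d^3) := by
  set S := {p : ℝ × ℝ | p.1 ∈ J 0 ∧ p.2 ∈ J 1 ∧ ξ 0 - p.1 - p.2 ∈ J 2 ∧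
      areaMap (ξ 0) p ∈ Set.Icc (ξ 1 - 3*δ) (ξ 1 + 3*δ) ×ˢ Set.Icc (ξ 2 - 3*δ) (ξ 2 + 3*δ)} with hS
  have hSm : MeasurableSet S := by
    have hm : Measurable (areaMap (ξ 0)) := by unfold areaMap; fun_prop
    refine MeasurableSet.inter (measurable_fst (hJ 0)) (MeasurableSet.inter (measurable_snd (hJ 1))
      (MeasurableSet.inter ?_ (hm (measurableSet_Icc.prod measurableSet_Icc))))
    exact (show Measurable fun p : ℝ × ℝ => ξ 0 - p.1 - p.2 by fun_prop) (hJ 2)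
  have hSi : Measurable (S.indicator (1 : ℝ × ℝ → ENNReal)) := measurable_one.indicator hSm
  set I1 : ℝ → ENNReal := (Set.Icc (-δ) δ).indicator 1 with hI1
  have hA := area_bound J hJ d hd hsep (ξ 0) (ξ 1) (ξ 2) (3*δ)
  have hvol : volume S ≤ ENNReal.ofReal (6 * δ^2 / d^3) := by
    have h6 : 0 < 6 * d^3 := by positivity
    have h7 : volume S ≤ ENNReal.ofReal (2 * (3 * δ)) * ENNReal.ofReal (2 * (3 * δ)) / ENNReal.ofReal (6 * d^3) := by
      rw [ENNReal.le_div_iff_mul_le (by left; rw [← pos_iff_ne_zero, ENNReal.ofReal_pos]; exact h6) (by left; exact ENNReal.ofReal_ne_top)]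
      exact hA
    refine h7.trans (le_of_eq ?_)
    rw [← ENNReal.ofReal_mul (by positivity), ← ENNReal.ofReal_div_of_pos h6]
    congr 1; field_simp; ring
  have hpt : ∀ η ζ : R3, (fatN (J 0) δ).indicator (1 : R3 → ENNReal) η *
      (fatN (J 1) δ).indicator (1 : R3 → ENNReal) ζ *
      (fatN (J 2) δ).indicator (1 : R3 → ENNReal) (ξ - η - ζ) ≤
      (I1 (η 1 - (η 0)^2) * I1 (η 2 - (η 0)^3)) *
       (S.indicator 1 (η 0, ζ 0) * I1 (ζ 1 - (ζ 0)^2) * I1 (ζ 2 - (ζ 0)^3)) := by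
    intro η ζ
    by_cases h0 : η ∈ fatN (J 0) δ
    swap; · simp [h0]
    by_cases h1 : ζ ∈ fatN (J 1) δ
    swap; · simp [h1]
    by_cases h2 : ξ - η - ζ ∈ fatN (J 2) δ
    swap; · simp [h2]
    have hmem : (η 0, ζ 0) ∈ S := by
      have h2' := h2
      simp only [fatN, Set.mem_ofPred_eq, PiLp.sub_apply, Set.mem_Icc] at h0 h1 h2
      refine ⟨h0.1, h1.1, by simpa using h2.1, ?_⟩
      simp only [areaMap, mem_prod, Set.mem_Icc]
      obtain ⟨-, ⟨a1, a2⟩, a3, a4⟩ := h0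
      obtain ⟨-, ⟨b1, b2⟩, b3, b4⟩ := h1
      obtain ⟨-, ⟨c1, c2⟩, c3, c4⟩ := h2
      refine ⟨⟨?_, ?_⟩, ?_, ?_⟩ <;> linarith
    simp only [hI1, Set.indicator_of_mem h0, Set.indicator_of_mem h1, Set.indicator_of_mem h2,
      Set.indicator_of_mem hmem, Set.indicator_of_mem h0.2.1, Set.indicator_of_mem h0.2.2,
      Set.indicator_of_mem h1.2.1, Set.indicator_of_mem h1.2.2]
    simp
  have hI1m : Measurable I1 := measurable_one.indicator measurableSet_Icc
  calc _ ≤ ∫⁻ η : R3, ∫⁻ ζ : R3, (I1 (η 1 - (η 0)^2) * I1 (η 2 - (η 0)^3)) *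
       (S.indicator 1 (η 0, ζ 0) * I1 (ζ 1 - (ζ 0)^2) * I1 (ζ 2 - (ζ 0)^3)) :=
        lintegral_mono fun η => lintegral_mono fun ζ => hpt η ζ
    _ = ∫⁻ η : R3, (ENNReal.ofReal (2*δ)^2 * ∫⁻ t, S.indicator 1 (η 0, t)) * I1 (η 1 - (η 0)^2) * I1 (η 2 - (η 0)^3) := by
        refine lintegral_congr fun η => ?_
        rw [lintegral_const_mul _ (by fun_prop),
          lemK (fun t => S.indicator 1 (η 0, t)) (by fun_prop) δ]
        ring
    _ = ENNReal.ofReal (2*δ)^2 * (ENNReal.ofReal (2*δ)^2 * ∫⁻ t', ∫⁻ t, S.indicator 1 (t', t)) := by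
        have hm : Measurable fun t' : ℝ => ∫⁻ t, S.indicator (1 : ℝ × ℝ → ENNReal) (t', t) :=
          hSi.lintegral_prod_right'
        rw [lemK (fun t' => ENNReal.ofReal (2*δ)^2 * ∫⁻ t, S.indicator 1 (t', t)) (hm.const_mul _) δ,
          lintegral_const_mul _ hm]
    _ = ENNReal.ofReal (2*δ)^2 * (ENNReal.ofReal (2*δ)^2 * volume S) := by
        rw [← lintegral_indicator_one hSm, Measure.volume_eq_prod, lintegral_prod _ hSi.aemeasurable]
    _ ≤ ENNReal.ofReal (2*δ)^2 * (ENNReal.ofReal (2*δ)^2 * ENNReal.ofReal (6 * δ^2 / d^3)) := by gcongr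
    _ = _ := by
        rw [← ENNReal.ofReal_pow (by positivity), ← ENNReal.ofReal_mul (by positivity), ← ENNReal.ofReal_mul (by positivity)]
        congr 1; ring

lemma cs_conv (N : Fin 3 → Set R3) (hN : ∀ i, MeasurableSet (N i)) (A : ENNReal)
    (u : Fin 3 → R3 → ENNReal) (hu : ∀ i, Measurable (u i)) (hs : ∀ i, ∀ x ∉ N i, u i x = 0) (ξ : R3)
    (hA : ∫⁻ η : R3, ∫⁻ ζ : R3, (N 0).indicator (1 : R3 → ENNReal) η *
      (N 1).indicator (1 : R3 → ENNReal) ζ *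
      (N 2).indicator (1 : R3 → ENNReal) (ξ - η - ζ) ≤ A) :
    (∫⁻ η, ∫⁻ ζ, u 0 η * (u 1 ζ * u 2 (ξ - η - ζ)))^2 ≤
      A * ∫⁻ η, ∫⁻ ζ, u 0 η ^2 * (u 1 ζ^2 * u 2 (ξ - η - ζ)^2) := by
  have hi : ∀ i, Measurable ((N i).indicator (1 : R3 → ENNReal)) := fun i =>
    measurable_one.indicator (hN i)
  set f : R3 × R3 → ENNReal := fun p => u 0 p.1 * (u 1 p.2 * u 2 (ξ - p.1 - p.2)) with hf
  set k : R3 × R3 → ENNReal := fun p => (N 0).indicator (1 : R3 → ENNReal) p.1 *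
      (N 1).indicator (1 : R3 → ENNReal) p.2 *
      (N 2).indicator (1 : R3 → ENNReal) (ξ - p.1 - p.2) with hk
  have m0 := hu 0
  have m1 := hu 1
  have m2 := hu 2
  have i0 := hi 0
  have i1 := hi 1
  have i2 := hi 2
  have hfm : Measurable f := by
    rw [hf]; fun_prop
  have hkm : Measurable k := by
    rw [hk]; fun_prop
  have hfk : ∀ p, f p = (f * k) p := by
    intro p
    simp only [hf, hk, Pi.mul_apply]
    by_cases h0 : p.1 ∈ N 0
    swap; · simp [hs 0 _ h0]
    by_cases h1 : p.2 ∈ N 1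
    swap; · simp [hs 1 _ h1]
    by_cases h2 : ξ - p.1 - p.2 ∈ N 2
    swap; · simp [hs 2 _ h2]
    simp [h0, h1, h2]
  have hk2 : ∀ p, k p ^ (2:ℝ) = k p := by
    intro p
    simp only [hk]
    by_cases h0 : p.1 ∈ N 0
    swap; · simp [h0]
    by_cases h1 : p.2 ∈ N 1
    swap; · simp [h1]
    by_cases h2 : ξ - p.1 - p.2 ∈ N 2
    swap; · simp [h2]
    simp [h0, h1, h2]
  have hCS := ENNReal.lintegral_mul_le_Lp_mul_Lq (volume.prod volume) Real.HolderConjugate.two_two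
    hfm.aemeasurable hkm.aemeasurable
  simp only [hk2] at hCS
  rw [← lintegral_congr hfk] at hCS
  have e1 : ∫⁻ p, f p ∂(volume.prod volume) = ∫⁻ η, ∫⁻ ζ, u 0 η * (u 1 ζ * u 2 (ξ - η - ζ)) :=
    lintegral_prod _ hfm.aemeasurable
  have e2 : ∫⁻ p, k p ∂(volume.prod volume) ≤ A := by
    rw [lintegral_prod _ hkm.aemeasurable]; exact hA
  have e3 : ∫⁻ p, f p ^ (2:ℝ) ∂(volume.prod volume) = ∫⁻ η, ∫⁻ ζ, u 0 η ^2 * (u 1 ζ^2 * u 2 (ξ - η - ζ)^2) := by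
    rw [lintegral_prod _ (hfm.pow_const _).aemeasurable]
    simp only [hf, ENNReal.rpow_ofNat, mul_pow]
  rw [← e1, ← e3]
  have sq : ∀ a : ENNReal, (a ^ (1/2:ℝ))^2 = a := by
    intro a
    rw [← ENNReal.rpow_natCast, ← ENNReal.rpow_mul]; norm_num
  calc _ ≤ ((∫⁻ p, f p ^ (2:ℝ) ∂(volume.prod volume))^(1/2:ℝ) * (∫⁻ p, k p ∂(volume.prod volume))^(1/2:ℝ))^2 := by
        gcongr
    _ = (∫⁻ p, k p ∂(volume.prod volume)) * ∫⁻ p, f p ^ (2:ℝ) ∂(volume.prod volume) := by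
        rw [mul_pow, sq, sq, mul_comm]
    _ ≤ _ := by gcongr

lemma lintegral_conv3 (v : Fin 3 → R3 → ENNReal) (hv : ∀ i, Measurable (v i)) :
    ∫⁻ ξ, ∫⁻ η, ∫⁻ ζ, v 0 η * (v 1 ζ * v 2 (ξ - η - ζ)) = (∫⁻ x, v 0 x) * (∫⁻ x, v 1 x) * ∫⁻ x, v 2 x := by
  have m0 := hv 0
  have m1 := hv 1
  have m2 := hv 2
  have hm : Measurable fun q : (R3 × R3) × R3 => v 0 q.1.2 * (v 1 q.2 * v 2 (q.1.1 - q.1.2 - q.2)) := by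
    fun_prop
  rw [lintegral_lintegral_swap (hm.lintegral_prod_right' (ν := volume)).aemeasurable]
  have : ∀ η, ∫⁻ ξ, ∫⁻ ζ, v 0 η * (v 1 ζ * v 2 (ξ - η - ζ)) = v 0 η * ((∫⁻ x, v 1 x) * ∫⁻ x, v 2 x) := by
    intro η
    rw [lintegral_lintegral_swap (by unfold Function.uncurry; fun_prop)]
    have : ∀ ζ, ∫⁻ ξ, v 0 η * (v 1 ζ * v 2 (ξ - η - ζ)) = v 0 η * (v 1 ζ * ∫⁻ x, v 2 x) := by
      intro ζ
      rw [lintegral_const_mul _ (by fun_prop), lintegral_const_mul _ (by fun_prop)]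
      simp_rw [sub_sub]
      rw [lintegral_sub_right_eq_self (v 2)]
    simp_rw [this]
    rw [lintegral_const_mul _ (by fun_prop), lintegral_mul_const _ m1]
  simp_rw [this]
  rw [lintegral_mul_const _ m0, mul_assoc]

lemma lintegral_schwartz (g : SchwartzMap R3 ℂ) :
    ∫⁻ x, ‖g x‖ₑ^2 = ENNReal.ofReal (∫ x, ‖g x‖^2) := by
  rw [ofReal_integral_eq_lintegral_ofReal]
  · refine lintegral_congr fun x => ?_
    rw [ENNReal.ofReal_pow (norm_nonneg _), ofReal_norm]
  · exact (g.memLp 2).integrable_norm_pow (by norm_num)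
  · exact Filter.Eventually.of_forall fun x => by positivity

lemma trilinear_global (J : Fin 3 → Set ℝ) (hJ : ∀ i, MeasurableSet (J i)) (d : ℝ) (hd : 0 < d)
    (hsep : ∀ i j, i ≠ j → ∀ t ∈ J i, ∀ t' ∈ J j, d ≤ |t - t'|) (δ : ℝ) (hδ : 0 ≤ δ)
    (g : Fin 3 → SchwartzMap R3 ℂ)
    (hg : ∀ i, Function.support (𝓕 ⇑(g i)) ⊆ fatN (J i) δ) :
    ∫ x, ‖g 0 x * g 1 x * g 2 x‖^2 ≤ 96 * δ^6 / d^3 * ∏ i : Fin 3, ∫ x, ‖g i x‖^2 := by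
  set P12 : SchwartzMap R3 ℂ := SchwartzMap.pairing (ContinuousLinearMap.mul ℂ ℂ) (g 1) (g 2) with hP12
  set P : SchwartzMap R3 ℂ := SchwartzMap.pairing (ContinuousLinearMap.mul ℂ ℂ) (g 0) P12 with hP
  set u : Fin 3 → R3 → ENNReal := fun i ξ => ‖𝓕 (g i : R3 → ℂ) ξ‖ₑ with hu
  have hum : ∀ i, Measurable (u i) := by
    intro i
    have : Continuous (𝓕 (g i : R3 → ℂ)) := by
      rw [← SchwartzMap.fourier_coe]; exact SchwartzMap.continuous _
    exact this.enorm.measurable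
  have hconv : ∀ ξ, ‖𝓕 P ξ‖ₑ ≤ ∫⁻ η, ∫⁻ ζ, u 0 η * (u 1 ζ * u 2 (ξ - η - ζ)) := by
    intro ξ
    have h1 : 𝓕 P ξ = ∫ η, 𝓕 (g 0 : R3 → ℂ) η * 𝓕 (P12 : R3 → ℂ) (ξ - η) := by
      rw [← fourier_mul_schwartz, SchwartzMap.fourier_coe]; rfl
    have h2 : ∀ ω, 𝓕 (P12 : R3 → ℂ) ω = ∫ ζ, 𝓕 (g 1 : R3 → ℂ) ζ * 𝓕 (g 2 : R3 → ℂ) (ω - ζ) := by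
      intro ω
      rw [← fourier_mul_schwartz]; rfl
    rw [h1]
    refine (enorm_integral_le_lintegral_enorm _).trans (lintegral_mono fun η => ?_)
    have m1 := hum 1
    have m2 := hum 2
    rw [enorm_mul, lintegral_const_mul _ (by fun_prop)]
    gcongr
    rw [h2]
    refine (enorm_integral_le_lintegral_enorm _).trans (lintegral_mono fun ζ => ?_)
    rw [enorm_mul]
  have hmain : ∫⁻ ξ, ‖𝓕 P ξ‖ₑ^2 ≤ ENNReal.ofReal (96 * δ^6 / d^3) * ((∫⁻ x, u 0 x^2) * (∫⁻ x, u 1 x^2) * ∫⁻ x, u 2 x^2) := by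
    rw [← lintegral_conv3 (fun i x => u i x^2) (fun i => (hum i).pow_const 2)]
    have m0 := hum 0
    have m1 := hum 1
    have m2 := hum 2
    have hm : Measurable fun q : (R3 × R3) × R3 => u 0 q.1.2^2 * (u 1 q.2^2 * u 2 (q.1.1 - q.1.2 - q.2)^2) := by
      fun_prop
    rw [← lintegral_const_mul]
    · refine lintegral_mono fun ξ => ?_
      refine (pow_le_pow_left' (hconv ξ) 2).trans ?_
      refine cs_conv (fun i => fatN (J i) δ) (fun i => fatN_meas _ (hJ i) δ) _ u hum ?_ ξ
        (overlap J hJ d hd hsep δ hδ ξ)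
      intro i x hx
      have : 𝓕 (g i : R3 → ℂ) x = 0 := by
        by_contra h
        exact hx (hg i h)
      simp [hu, this]
    · exact (hm.lintegral_prod_right' (ν := volume)).lintegral_prod_right'
  have hpl : ∀ h : SchwartzMap R3 ℂ, ∫⁻ ξ, ‖𝓕 (h : R3 → ℂ) ξ‖ₑ^2 = ENNReal.ofReal (∫ x, ‖h x‖^2) := by
    intro h
    rw [← SchwartzMap.integral_norm_sq_fourier, ← lintegral_schwartz, SchwartzMap.fourier_coe]
  have hPl := hpl P
  rw [← SchwartzMap.fourier_coe] at hPl
  simp only [hu] at hmain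
  rw [hPl, hpl, hpl, hpl, ← ENNReal.ofReal_mul (by positivity), ← ENNReal.ofReal_mul (by positivity),
    ← ENNReal.ofReal_mul (by positivity), ENNReal.ofReal_le_ofReal_iff (by positivity)] at hmain
  rw [Fin.prod_univ_three]
  refine le_trans (le_of_eq ?_) hmain
  congr 1
  ext x
  simp only [hP, hP12, SchwartzMap.pairing_apply_apply, ContinuousLinearMap.mul_apply']
  rw [mul_assoc]

lemma exists_cutoff : ∃ C > (0:ℝ), ∃ φ : SchwartzMap R3 ℂ,
    (∀ y, ‖φ y‖^2 ≤ C * (1 + ‖y‖) ^ (-(100:ℝ))) ∧ (∀ y, ‖y‖ < 1 → 1 ≤ ‖φ y‖) ∧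
    ∃ Ψ : R3 → ℂ, Integrable Ψ ∧ (∀ η, Ψ η ≠ 0 → ‖η‖ ≤ 1/6) ∧
      ∀ y, φ y = ∫ η, (𝐞 (inner ℝ η y) : ℂ) * Ψ η := by
  let b : ContDiffBump (0 : R3) := ⟨1/12, 1/6, by norm_num, by norm_num⟩
  have hMpos : 0 < ∫ x, b x := b.integral_pos
  set M := ∫ x, b x with hM
  have hbint : Integrable (fun x => b x) := b.integrable
  have hcs : HasCompactSupport (fun x : R3 => ((2 / M * b x : ℝ) : ℂ)) := by
    have := b.hasCompactSupport.comp_left (g := fun t : ℝ => ((2 / M * t : ℝ) : ℂ)) (by simp)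
    exact this
  have hcd : ContDiff ℝ (⊤ : ℕ∞) (fun x : R3 => ((2 / M * b x : ℝ) : ℂ)) := by
    exact Complex.ofRealCLM.contDiff.comp (contDiff_const.mul b.contDiff)
  set Ψ : SchwartzMap R3 ℂ := hcs.toSchwartzMap hcd with hΨ
  have hΨa : ∀ x, Ψ x = ((2 / M * b x : ℝ) : ℂ) := fun x => rfl
  have hform : ∀ y, (𝓕⁻ Ψ : SchwartzMap R3 ℂ) y = ∫ η, (𝐞 (inner ℝ η y) : ℂ) * Ψ η := by
    intro y
    rw [SchwartzMap.fourierInv_coe, Real.fourierInv_eq]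
    simp [Circle.smul_def]
  have hdec : ∃ C > (0:ℝ), ∀ y, (1 + ‖y‖)^50 * ‖(𝓕⁻ Ψ : SchwartzMap R3 ℂ) y‖ ≤ C := by
    have := fun y => SchwartzMap.one_add_le_sup_seminorm_apply (𝕜 := ℝ) (m := (50, 0)) (k := 50) (n := 0) le_rfl le_rfl
      (𝓕⁻ Ψ : SchwartzMap R3 ℂ) y
    simp only [norm_iteratedFDeriv_zero] at this
    exact ⟨_, lt_of_le_of_lt (le_trans (by positivity) (this 0)) (lt_add_one _), fun y => (this y).trans (le_of_lt (lt_add_one _))⟩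
  obtain ⟨C, hC, hCb⟩ := hdec
  refine ⟨C^2, by positivity, 𝓕⁻ Ψ, ?_, ?_, Ψ, Ψ.integrable, ?_, hform⟩
  · intro y
    have h1 : 0 < 1 + ‖y‖ := by positivity
    have h2 := hCb y
    rw [Real.rpow_neg h1.le, ← div_eq_mul_inv, le_div_iff₀ (by positivity)]
    have : (1 + ‖y‖) ^ (100:ℝ) = ((1 + ‖y‖)^50)^2 := by
      rw [← pow_mul]; norm_cast
    rw [this, ← mul_pow]
    gcongr
    linarith
  · intro y hy
    rw [hform]
    refine le_trans ?_ (Complex.abs_re_le_norm _)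
    refine le_trans ?_ (le_abs_self _)
    have hint : Integrable (fun η => (𝐞 (inner ℝ η y) : ℂ) * Ψ η) := by
      refine Ψ.integrable.mono ?_ ?_
      · have c1 : Continuous (fun η : R3 => (𝐞 (inner ℝ η y) : ℂ)) :=
          continuous_subtype_val.comp (continuous_fourierChar.comp (by fun_prop))
        exact (c1.mul Ψ.continuous).aestronglyMeasurable
      · exact Filter.Eventually.of_forall fun η => by simp [Circle.norm_coe]
    have hre : (∫ η, (𝐞 (inner ℝ η y) : ℂ) * Ψ η).re = ∫ η, ((𝐞 (inner ℝ η y) : ℂ) * Ψ η).re :=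
      (integral_re hint).symm
    rw [hre]
    have : (1:ℝ) = ∫ η, 1 / M * b η := by
      rw [integral_const_mul, ← hM]; field_simp
    rw [this]
    refine integral_mono (hbint.const_mul _) hint.re ?_
    intro η
    have hb0 : 0 ≤ b η := b.nonneg
    have e : RCLike.re ((𝐞 (inner ℝ η y) : ℂ) * Ψ η) = Real.cos (2 * π * inner ℝ η y) * (2 / M * b η) := by
      rw [hΨa, Real.fourierChar_apply]
      show ((_ : ℂ) * _).re = _
      rw [Complex.re_mul_ofReal, Complex.exp_ofReal_mul_I_re]
    show 1 / M * b η ≤ RCLike.re ((𝐞 (inner ℝ η y) : ℂ) * Ψ η)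
    rw [e]
    by_cases hη : b η = 0
    · simp [hη]
    have hη' : ‖η‖ < 1/6 := by
      have : η ∈ Function.support b := hη
      rw [b.support_eq] at this
      exact mem_ball_zero_iff.1 this
    have hin : |inner ℝ η y| ≤ 1/6 := by
      refine (abs_real_inner_le_norm η y).trans ?_
      calc ‖η‖ * ‖y‖ ≤ (1/6) * 1 := by gcongr
        _ = _ := by norm_num
    have hcos : 1/2 ≤ Real.cos (2 * π * inner ℝ η y) := by
      rw [← Real.cos_abs, ← Real.cos_pi_div_three]
      apply Real.cos_le_cos_of_nonneg_of_le_pi (abs_nonneg _)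
      · linarith [Real.pi_pos]
      · rw [abs_mul, abs_of_pos (by positivity : 0 < 2 * π)]
        nlinarith [Real.pi_pos]
    calc 1 / M * b η = 1/2 * (2 / M * b η) := by ring
      _ ≤ _ := by gcongr
  · intro η h
    have hη : b η ≠ 0 := by
      intro h0; apply h; rw [hΨa, h0]; simp
    have : η ∈ Function.support b := hη
    rw [b.support_eq] at this
    have h3 : ‖η‖ < 1/6 := mem_ball_zero_iff.1 this
    exact h3.le

lemma fat_incl (a b r : ℝ) (hr : 1 ≤ r) (hab : Set.Icc a b ⊆ Set.Icc (0:ℝ) 1) (η ζ : R3)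
    (hζ : ‖ζ‖ ≤ 1/6) (h : η - r⁻¹ • ζ ∈ momNbhd (Set.Icc a b) r) :
    η ∈ fatN (Metric.cthickening (r⁻¹ / 6) (Set.Icc a b)) (5 * r⁻¹) := by
  have hrp : 0 < r⁻¹ := by positivity
  have hr1 : r⁻¹ ≤ 1 := inv_le_one_of_one_le₀ hr
  obtain ⟨h0, h12⟩ := h
  simp only [PiLp.sub_apply, PiLp.smul_apply, smul_eq_mul] at h0 h12
  have hz : ∀ i, |ζ i| ≤ 1/6 := fun i => (PiLp.norm_apply_le ζ i).trans hζ
  set ρ := r⁻¹ with hρ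
  set t' := η 0 - ρ * ζ 0 with ht'
  obtain ⟨t0, t1⟩ := hab h0
  have hw : ∀ i, |ρ * ζ i| ≤ ρ / 6 := by
    intro i
    rw [abs_mul, abs_of_pos hrp]
    nlinarith [hz i]
  have w0 := abs_le.1 (hw 0)
  have w1 := abs_le.1 (hw 1)
  have w2 := abs_le.1 (hw 2)
  have hA : |η 1 - ρ * ζ 1 - t'^2| ≤ ρ := abs_le_of_sq_le_sq (by nlinarith [sq_nonneg (η 2 - ρ * ζ 2 - t'^3)]) hrp.le
  have hB : |η 2 - ρ * ζ 2 - t'^3| ≤ ρ := abs_le_of_sq_le_sq (by nlinarith [sq_nonneg (η 1 - ρ * ζ 1 - t'^2)]) hrp.le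
  rw [abs_le] at hA hB
  have hη0 : η 0 = t' + ρ * ζ 0 := by rw [ht']; ring
  set e := ρ * ζ 0 with he
  have hsq : |(t' + e)^2 - t'^2| ≤ 3 * (ρ/6) := by
    rw [show (t' + e)^2 - t'^2 = (2 * t' + e) * e by ring, abs_mul]
    apply mul_le_mul _ (hw 0) (abs_nonneg _) (by norm_num)
    rw [abs_le]; constructor <;> linarith
  have hcu : |(t' + e)^3 - t'^3| ≤ 7 * (ρ/6) := by
    rw [show (t' + e)^3 - t'^3 = (3 * t'^2 + 3 * t' * e + e^2) * e by ring, abs_mul]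
    apply mul_le_mul _ (hw 0) (abs_nonneg _) (by norm_num)
    rw [abs_le]; constructor <;> nlinarith
  rw [abs_le] at hsq hcu
  refine ⟨?_, ?_, ?_⟩
  · rw [isCompact_Icc.cthickening_eq_biUnion_closedBall (by positivity)]
    simp only [Set.mem_iUnion]
    refine ⟨t', h0, ?_⟩
    rw [Metric.mem_closedBall, Real.dist_eq, hη0]
    rw [add_sub_cancel_left]; exact hw 0
  · rw [hη0]; constructor <;> linarith
  · rw [hη0]; constructor <;> linarith

/-- **Proposition 2.15 (local trilinear restriction for the moment curve in ℝ³).** -/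
theorem trilinear_restriction_moment :
    ∃ C > (0:ℝ), ∀ r : ℝ, 1 ≤ r → ∀ z : R3, ∃ W : R3 → ℝ,
      Measurable W ∧ (∀ x, 0 < W x) ∧ (∀ x ∈ Metric.ball z r, 1 ≤ W x) ∧
      (∀ x, W x ≤ C * (1 + Metric.infDist x (Metric.ball z r) / r) ^ (-(100:ℝ))) ∧
      ∀ s : ℝ, 0 < s → 1 ≤ s → 10 * s ≤ r →
      ∀ a b : Fin 3 → ℝ, (∀ i, Set.Icc (a i) (b i) ⊆ Set.Icc (0:ℝ) 1) →
      (∀ i j, i ≠ j →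
        ∀ t ∈ Set.Icc (a i) (b i), ∀ t' ∈ Set.Icc (a j) (b j), s⁻¹ ≤ |t - t'|) →
      ∀ f : Fin 3 → SchwartzMap R3 ℂ,
      (∀ i, Function.support (𝓕 ⇑(f i)) ⊆ momNbhd (Set.Icc (a i) (b i)) r) →
      (∫ x in Metric.ball z r, ‖f 0 x * f 1 x * f 2 x‖ ^ 2) ≤
        C * s ^ 3 * (((volume (Metric.ball z r)).toReal) ^ 2)⁻¹ *
          ∏ i : Fin 3, ∫ x : R3, ‖f i x‖ ^ 2 * W x := by
  obtain ⟨C₀, hC₀, φ, hφd, hφ1, Ψ, hΨi, hΨs, hφΨ⟩ := exists_cutoff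
  refine ⟨C₀ + 1 + 12000000 * 29, by positivity, ?_⟩
  intro r hr z
  have hr0 : 0 < r := by linarith
  set Φ : R3 → ℂ := fun x => φ (r⁻¹ • (x - z)) with hΦ
  have hΦc : Continuous Φ := φ.continuous.comp (by fun_prop)
  have hnorm : ∀ x : R3, ‖r⁻¹ • (x - z)‖ = dist x z / r := by
    intro x
    rw [norm_smul, Real.norm_of_nonneg (by positivity), dist_eq_norm]; field_simp
  have hdec : Continuous fun x : R3 => (1 + ‖r⁻¹ • (x - z)‖) ^ (-(100:ℝ)) := by
    refine Continuous.rpow_const (by fun_prop) fun x => ?_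
    left; positivity
  set W : R3 → ℝ := fun x => ‖Φ x‖^2 + (1 + ‖r⁻¹ • (x - z)‖) ^ (-(100:ℝ)) with hW
  have hWc : Continuous W := (hΦc.norm.pow 2).add hdec
  have hWpos : ∀ x, 0 < W x := fun x => by
    have : 0 < (1 + ‖r⁻¹ • (x - z)‖) ^ (-(100:ℝ)) := Real.rpow_pos_of_pos (by positivity) _
    simp only [hW]; positivity
  have hΦ1 : ∀ x ∈ Metric.ball z r, 1 ≤ ‖Φ x‖ := by
    intro x hx
    apply hφ1
    rw [hnorm, div_lt_one hr0]; exact hx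
  have hWb : ∀ x, W x ≤ (C₀ + 1) * (1 + ‖r⁻¹ • (x - z)‖) ^ (-(100:ℝ)) := by
    intro x
    have := hφd (r⁻¹ • (x - z))
    simp only [hW, hΦ]; linarith
  refine ⟨W, hWc.measurable, hWpos, ?_, ?_, ?_⟩
  · intro x hx
    have h1 := hΦ1 x hx
    have : 0 < (1 + ‖r⁻¹ • (x - z)‖) ^ (-(100:ℝ)) := Real.rpow_pos_of_pos (by positivity) _
    simp only [hW]; nlinarith
  · intro x
    refine (hWb x).trans ?_
    have hid : Metric.infDist x (Metric.ball z r) ≤ dist x z :=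
      Metric.infDist_le_dist_of_mem (Metric.mem_ball_self hr0)
    have hid0 : 0 ≤ Metric.infDist x (Metric.ball z r) := Metric.infDist_nonneg
    have hle : (1 + ‖r⁻¹ • (x - z)‖) ^ (-(100:ℝ)) ≤
        (1 + Metric.infDist x (Metric.ball z r) / r) ^ (-(100:ℝ)) := by
      apply Real.rpow_le_rpow_of_nonpos (by positivity) _ (by norm_num)
      rw [hnorm]; gcongr
    have hq : C₀ + 1 ≤ C₀ + 1 + 12000000 * 29 := by linarith
    exact mul_le_mul hq hle (Real.rpow_nonneg (by positivity) _) (by positivity)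
  · intro s hs hs1 hsr a b hab hsep f hf
    have hrp : 0 < r⁻¹ := by positivity
    have hrs : r⁻¹ ≤ s⁻¹ / 10 := by
      rw [inv_eq_one_div, inv_eq_one_div, div_div, div_le_div_iff₀ hr0 (by positivity)]; linarith
    have hΦt : Φ.HasTemperateGrowth := by
      refine φ.hasTemperateGrowth.comp ?_
      fun_prop
    set g : Fin 3 → SchwartzMap R3 ℂ := fun i => SchwartzMap.smulLeftCLM ℂ Φ (f i) with hg
    have hga : ∀ i x, g i x = Φ x * f i x := fun i x => by
      simp only [hg]; rw [SchwartzMap.smulLeftCLM_apply_apply hΦt]; rfl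
    set J : Fin 3 → Set ℝ := fun i => Metric.cthickening (r⁻¹ / 6) (Set.Icc (a i) (b i)) with hJ
    have hJm : ∀ i, MeasurableSet (J i) := fun i => Metric.isClosed_cthickening.measurableSet
    have hJsep : ∀ i j, i ≠ j → ∀ t ∈ J i, ∀ t' ∈ J j, s⁻¹ / 2 ≤ |t - t'| := by
      intro i j hij t ht t' ht'
      simp only [hJ] at ht ht'
      rw [isCompact_Icc.cthickening_eq_biUnion_closedBall (by positivity)] at ht ht'
      simp only [Set.mem_iUnion, Metric.mem_closedBall, Real.dist_eq] at ht ht'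
      obtain ⟨u, hu, hut⟩ := ht
      obtain ⟨u', hu', hut'⟩ := ht'
      have := hsep i j hij u hu u' hu'
      have h3 : |u - u'| ≤ |t - u| + |t - t'| + |t' - u'| := by
        calc |u - u'| = |(-(t - u)) + (t - t') + (t' - u')| := by congr 1; ring
          _ ≤ |(-(t - u))| + |t - t'| + |t' - u'| := abs_add_three _ _ _
          _ = _ := by rw [abs_neg]
      have : 0 < s⁻¹ := by positivity
      linarith
    have hgs : ∀ i, Function.support (𝓕 ⇑(g i)) ⊆ fatN (J i) (5 * r⁻¹) := by
      intro i η hη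
      have hG : Integrable (fun η : R3 => (𝐞 (-(r⁻¹ * inner ℝ η z)) : ℂ) * Ψ η) := by
        refine hΨi.mono ?_ ?_
        · have c1 : Continuous (fun η : R3 => (𝐞 (-(r⁻¹ * inner ℝ η z)) : ℂ)) :=
            continuous_subtype_val.comp (continuous_fourierChar.comp (by fun_prop))
          exact c1.aestronglyMeasurable.mul hΨi.aestronglyMeasurable
        · exact Filter.Eventually.of_forall fun η => by simp [Circle.norm_coe]
      have key := fourier_mul_int _ (f i) hG (f i).integrable r⁻¹ η
      have hcoe : (fun x => (∫ η, (𝐞 (r⁻¹ * inner ℝ η x) : ℂ) * ((𝐞 (-(r⁻¹ * inner ℝ η z)) : ℂ) * Ψ η)) * f i x) = ⇑(g i) := by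
        ext x
        rw [hga]
        congr 1
        simp only [hΦ]
        rw [hφΨ]
        refine integral_congr_ae (Filter.Eventually.of_forall fun η => ?_)
        simp only
        rw [← mul_assoc, ← Circle.coe_mul, ← AddChar.map_add_eq_mul, inner_smul_right, inner_sub_right]
        congr 3; ring
      rw [hcoe] at key
      have hne : ∃ ζ, (𝐞 (-(r⁻¹ * inner ℝ ζ z)) : ℂ) * Ψ ζ * 𝓕 (f i : R3 → ℂ) (η - r⁻¹ • ζ) ≠ 0 := by
        by_contra hcon
        push Not at hcon
        apply hη
        rw [key]
        simp_rw [hcon]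
        simp
      obtain ⟨ζ, hζ⟩ := hne
      have h1 : Ψ ζ ≠ 0 := fun h => hζ (by simp [h])
      have h2 : 𝓕 (f i : R3 → ℂ) (η - r⁻¹ • ζ) ≠ 0 := fun h => hζ (by simp [h])
      exact fat_incl (a i) (b i) r hr (hab i) η ζ (hΨs ζ h1) (hf i h2)
    have hT := trilinear_global J hJm (s⁻¹ / 2) (by positivity) hJsep (5 * r⁻¹) (by positivity) g hgs
    have hgint : ∀ h : SchwartzMap R3 ℂ, Integrable (fun x => ‖h x‖^2) := fun h =>
      (h.memLp 2).integrable_norm_pow (by norm_num)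
    have hfW : ∀ i, Integrable (fun x => ‖f i x‖^2 * W x) := by
      intro i
      refine ((hgint (f i)).mul_const (C₀ + 1)).mono ?_ ?_
      · exact ((((f i).continuous.norm.pow 2)).mul hWc).aestronglyMeasurable
      · refine Filter.Eventually.of_forall fun x => ?_
        have h1 : W x ≤ C₀ + 1 := by
          refine (hWb x).trans ?_
          have : (1 + ‖r⁻¹ • (x - z)‖) ^ (-(100:ℝ)) ≤ 1 :=
            Real.rpow_le_one_of_one_le_of_nonpos (by linarith [norm_nonneg (r⁻¹ • (x - z))]) (by norm_num)
          nlinarith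
        have h0 := hWpos x
        rw [Real.norm_of_nonneg (by positivity), Real.norm_of_nonneg (by positivity)]
        gcongr
    have hgf : ∀ i, ∫ x, ‖g i x‖^2 ≤ ∫ x, ‖f i x‖^2 * W x := by
      intro i
      refine integral_mono (hgint (g i)) (hfW i) fun x => ?_
      simp only
      rw [hga, norm_mul, mul_pow, mul_comm]
      have : 0 < (1 + ‖r⁻¹ • (x - z)‖) ^ (-(100:ℝ)) := Real.rpow_pos_of_pos (by positivity) _
      gcongr
      simp only [hW]; linarith
    have hP : Integrable (fun x => ‖g 0 x * g 1 x * g 2 x‖^2) := by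
      have := hgint (SchwartzMap.pairing (ContinuousLinearMap.mul ℂ ℂ)
        (SchwartzMap.pairing (ContinuousLinearMap.mul ℂ ℂ) (g 0) (g 1)) (g 2))
      simpa only [SchwartzMap.pairing_apply_apply, ContinuousLinearMap.mul_apply'] using this
    have hPf : Integrable (fun x => ‖f 0 x * f 1 x * f 2 x‖^2) := by
      have := hgint (SchwartzMap.pairing (ContinuousLinearMap.mul ℂ ℂ)
        (SchwartzMap.pairing (ContinuousLinearMap.mul ℂ ℂ) (f 0) (f 1)) (f 2))
      simpa only [SchwartzMap.pairing_apply_apply, ContinuousLinearMap.mul_apply'] using this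
    have hL : (∫ x in Metric.ball z r, ‖f 0 x * f 1 x * f 2 x‖ ^ 2) ≤ ∫ x, ‖g 0 x * g 1 x * g 2 x‖^2 := by
      refine le_trans (setIntegral_mono_on hPf.integrableOn hP.integrableOn Metric.isOpen_ball.measurableSet ?_)
        (setIntegral_le_integral hP (Filter.Eventually.of_forall fun x => by positivity))
      intro x hx
      have h1 := hΦ1 x hx
      simp only [hga]
      rw [show Φ x * f 0 x * (Φ x * f 1 x) * (Φ x * f 2 x) = Φ x ^ 3 * (f 0 x * f 1 x * f 2 x) by ring,
        norm_mul (Φ x ^ 3), norm_pow (Φ x)]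
      have h2 : 1 ≤ ‖Φ x‖^3 := one_le_pow₀ h1
      apply pow_le_pow_left₀ (norm_nonneg _)
      exact le_mul_of_one_le_left (norm_nonneg _) h2
    refine hL.trans (hT.trans ?_)
    have hprod : ∏ i : Fin 3, ∫ x, ‖g i x‖^2 ≤ ∏ i : Fin 3, ∫ x, ‖f i x‖^2 * W x :=
      Finset.prod_le_prod (fun i _ => integral_nonneg fun x => by positivity) fun i _ => hgf i
    have hvol : (volume (Metric.ball z r)).toReal = r^3 * (π * 4 / 3) := by
      rw [EuclideanSpace.volume_ball_fin_three]
      simp [ENNReal.toReal_ofReal hr0.le, Real.pi_pos.le]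
      left; positivity
    rw [hvol]
    refine mul_le_mul ?_ hprod (Finset.prod_nonneg fun i _ => integral_nonneg fun x => by positivity) (by positivity)
    have hpi : (π * 4 / 3)^2 ≤ 29 := by nlinarith [Real.pi_pos, Real.pi_le_four]
    have e1 : 96 * (5 * r⁻¹)^6 / (s⁻¹ / 2)^3 = 12000000 * s^3 / r^6 := by
      field_simp; norm_num
    rw [e1, ← div_eq_mul_inv, div_le_div_iff₀ (by positivity) (by positivity)]
    calc 12000000 * s^3 * (r^3 * (π * 4 / 3))^2 = 12000000 * (π * 4 / 3)^2 * s^3 * r^6 := by ring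
      _ ≤ (C₀ + 1 + 12000000 * 29) * s^3 * r^6 := by
        gcongr
        nlinarith
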